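/- Let n ≤ 4, m ≥ 1, and let Γ be a metric-compatible (0,1)-soliton on the trivial bundle ℝⁿ × ℝᵐ with polynomial curvature growth to order two. Then Γ is flat, i.e. F_{ij}(x) = 0 for all indices i, j and all x ∈ ℝⁿ. -/

import Mathlib

open MeasureTheory Real Filter Matrix
open scoped ENNReal

noncomputable section

namespace YM

variable {n m : ℕ}

/-- A connection on the trivial bundle `ℝⁿ × ℝᵐ`, given by its coefficient
matrices `Γ₁(x), …, Γₙ(x)`. -/
abbrev Conn (n m : ℕ) :=
  (Fin n → ℝ) → Fin n → Matrix (Fin m) (Fin m) ℝ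

/-- Entrywise `i`-th partial derivative of a matrix-valued map on `ℝⁿ`. -/
def pder (i : Fin n) (A : (Fin n → ℝ) → Matrix (Fin m) (Fin m) ℝ)
    (x : Fin n → ℝ) : Matrix (Fin m) (Fin m) ℝ :=
  Matrix.of fun a b => fderiv ℝ (fun y => A y a b) x (Pi.single i 1)

/-- Smoothness (entrywise) of a matrix-valued map on `ℝⁿ`. -/
def SmoothMat (A : (Fin n → ℝ) → Matrix (Fin m) (Fin m) ℝ) : Prop :=
  ∀ a b, ContDiff ℝ (⊤ : ℕ∞) fun y => A y a b

/-- Smoothness of a connection. -/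
def Smooth (Γ : Conn n m) : Prop :=
  ∀ i, SmoothMat fun x => Γ x i

/-- Matrix commutator. -/
def comm (A B : Matrix (Fin m) (Fin m) ℝ) : Matrix (Fin m) (Fin m) ℝ :=
  A * B - B * A

/-- Curvature `F_{ij} = ∂ᵢΓⱼ − ∂ⱼΓᵢ + [Γᵢ, Γⱼ]`. -/
def curv (Γ : Conn n m) (i j : Fin n) (x : Fin n → ℝ) :
    Matrix (Fin m) (Fin m) ℝ :=
  pder i (fun y => Γ y j) x - pder j (fun y => Γ y i) x + comm (Γ x i) (Γ x j)

/-- Covariant derivative `∇ᵢA = ∂ᵢA + [Γᵢ, A]`. -/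
def covDer (Γ : Conn n m) (i : Fin n)
    (A : (Fin n → ℝ) → Matrix (Fin m) (Fin m) ℝ) (x : Fin n → ℝ) :
    Matrix (Fin m) (Fin m) ℝ :=
  pder i A x + comm (Γ x i) (A x)

/-- `(D*F)ₖ = −Σᵢ ∇ᵢF_{ik}`. -/
def dstarF (Γ : Conn n m) (k : Fin n) (x : Fin n → ℝ) :
    Matrix (Fin m) (Fin m) ℝ :=
  - ∑ i, covDer Γ i (fun y => curv Γ i k y) x

/-- Squared Frobenius norm of a matrix. -/
def frobSq (A : Matrix (Fin m) (Fin m) ℝ) : ℝ := ∑ a, ∑ b, (A a b) ^ 2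

/-- Frobenius norm of a matrix. -/
def frobNorm (A : Matrix (Fin m) (Fin m) ℝ) : ℝ := Real.sqrt (frobSq A)

/-- Frobenius inner product `⟨A, B⟩ = tr(A Bᵀ)`. -/
def frobInner (A B : Matrix (Fin m) (Fin m) ℝ) : ℝ := ∑ a, ∑ b, A a b * B a b

/-- `|F(x)|² = Σ_{i,j} ‖F_{ij}(x)‖²` (Frobenius norms). -/
def normSqF (Γ : Conn n m) (x : Fin n → ℝ) : ℝ :=
  ∑ i, ∑ j, frobSq (curv Γ i j x)

/-- `|F(x)|`. -/
def normF (Γ : Conn n m) (x : Fin n → ℝ) : ℝ := Real.sqrt (normSqF Γ x)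

/-- Euclidean norm on `ℝⁿ`. -/
def enorm (x : Fin n → ℝ) : ℝ := Real.sqrt (∑ i, x i ^ 2)

/-- Metric compatibility: all coefficient matrices are skew-symmetric. -/
def MetricCompat (Γ : Conn n m) : Prop :=
  ∀ x i, (Γ x i)ᵀ = -(Γ x i)

/-- `(x₀,t₀)`-soliton: `Σᵢ ∇ᵢF_{ik} = (1/(2t₀)) Σᵢ (x−x₀)ᵢ F_{ik}`. -/
def IsSolitonAt (Γ : Conn n m) (x₀ : Fin n → ℝ) (t₀ : ℝ) : Prop :=
  ∀ (x : Fin n → ℝ) (k : Fin n),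
    ∑ i, covDer Γ i (fun y => curv Γ i k y) x
      = (1 / (2 * t₀)) • ∑ i, (x i - x₀ i) • curv Γ i k x

/-- `(0,1)`-soliton. -/
def IsSoliton (Γ : Conn n m) : Prop := IsSolitonAt Γ 0 1

/-- The `ℱ`-functional
`ℱ_{x₀,t₀}(Γ) = t₀² (4πt₀)^{−n/2} ∫ |F|² e^{−|x−x₀|²/(4t₀)}`. -/
def Ffunc (Γ : Conn n m) (x₀ : Fin n → ℝ) (t₀ : ℝ) : ℝ :=
  t₀ ^ 2 * (4 * π * t₀) ^ (-(n : ℝ) / 2) *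
    ∫ x : Fin n → ℝ,
      normSqF Γ x * Real.exp (-(∑ i, (x i - x₀ i) ^ 2) / (4 * t₀))

/-- The entropy `λ(Γ) = sup_{x₀, t₀>0} ℱ_{x₀,t₀}(Γ)`, valued in `[0,∞]`. -/
def entropy (Γ : Conn n m) : ℝ≥0∞ :=
  ⨆ (x₀ : Fin n → ℝ) (t₀ : ℝ) (_ : 0 < t₀), ENNReal.ofReal (Ffunc Γ x₀ t₀)

/-- Polynomial curvature growth: `|F(x)| ≤ p(|x|)`. -/
def PolyCurvGrowth (Γ : Conn n m) : Prop :=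
  ∃ p : Polynomial ℝ, ∀ x, normF Γ x ≤ p.eval (enorm x)

/-- Polynomial curvature growth to order two. -/
def PolyCurvGrowth2 (Γ : Conn n m) : Prop :=
  ∃ p : Polynomial ℝ, ∀ x,
    normF Γ x
      + (∑ i, ∑ j, ∑ k, frobNorm (covDer Γ i (fun y => curv Γ j k y) x))
      + (∑ i, ∑ j, ∑ k, ∑ l,
          frobNorm (covDer Γ i
            (fun y => covDer Γ j (fun z => curv Γ k l z) y) x))
      ≤ p.eval (enorm x)

/-- Cylindrical: some nonzero constant vector `V` satisfies `V ⌟ F ≡ 0`. -/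
def Cylindrical (Γ : Conn n m) : Prop :=
  ∃ V : Fin n → ℝ, V ≠ 0 ∧
    ∀ (x : Fin n → ℝ) (k : Fin n), ∑ i, V i • curv Γ i k x = 0

/-- `(DB)_{ij} = ∇ᵢBⱼ − ∇ⱼBᵢ`. -/
def Dop (Γ B : Conn n m) (i j : Fin n) (x : Fin n → ℝ) :
    Matrix (Fin m) (Fin m) ℝ :=
  covDer Γ i (fun y => B y j) x - covDer Γ j (fun y => B y i) x

/-- The second variation operator
`(L_{x₀,t₀}B)ₖ = −Σᵢ∇ᵢ(DB)_{ik} + (1/(2t₀))Σᵢ(x−x₀)ᵢ(DB)_{ik} + Σᵢ[Bᵢ,F_{ik}]`. -/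
def Lop (Γ B : Conn n m) (x₀ : Fin n → ℝ) (t₀ : ℝ) (k : Fin n)
    (x : Fin n → ℝ) : Matrix (Fin m) (Fin m) ℝ :=
  (- ∑ i, covDer Γ i (fun y => Dop Γ B i k y) x)
    + (1 / (2 * t₀)) • ∑ i, (x i - x₀ i) • Dop Γ B i k x
    + ∑ i, comm (B x i) (curv Γ i k x)

/-- The Gaussian weight `G(x) = (4π)^{−n/2} e^{−|x|²/4}`. -/
def gaussG (n : ℕ) (x : Fin n → ℝ) : ℝ :=
  (4 * π) ^ (-(n : ℝ) / 2) * Real.exp (-(∑ i, x i ^ 2) / 4)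

/-- The second variation form `Q(σ,V,B)` of a `(0,1)`-soliton. -/
def Q (Γ : Conn n m) (σ : ℝ) (V : Fin n → ℝ) (B : Conn n m) : ℝ :=
  -4 * σ ^ 2 * (∫ x : Fin n → ℝ, (∑ k, frobSq (dstarF Γ k x)) * gaussG n x)
    - 2 * (∫ x : Fin n → ℝ,
        (∑ k, frobSq (∑ i, V i • curv Γ i k x)) * gaussG n x)
    + 4 * (∫ x : Fin n → ℝ,
        (∑ k, frobInner (B x k) (Lop Γ B 0 1 k x)) * gaussG n x)
    - 4 * (∫ x : Fin n → ℝ,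
        (∑ k, frobInner (B x k)
          (∑ i, (σ * x i + V i) • curv Γ i k x)) * gaussG n x)

/-- Skew-symmetric-matrix-valued 1-form. -/
def SkewVals (B : Conn n m) : Prop := ∀ x i, (B x i)ᵀ = -(B x i)

/-- `ℱ`-instability. -/
def FUnstable (Γ : Conn n m) : Prop :=
  ∃ B : Conn n m, Smooth B ∧ HasCompactSupport B ∧ SkewVals B ∧
    ∀ (σ : ℝ) (V : Fin n → ℝ), Q Γ σ V B < 0

/-- Joint smoothness (entrywise) of a one-parameter family of connections on a
time set `S`. -/
def SmoothFamilyOn (Γt : ℝ → Conn n m) (S : Set ℝ) : Prop :=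
  ∀ (k : Fin n) (a b : Fin m),
    ContDiffOn ℝ (⊤ : ℕ∞) (fun p : ℝ × (Fin n → ℝ) => Γt p.1 p.2 k a b)
      (S ×ˢ (Set.univ : Set (Fin n → ℝ)))

/-- Yang–Mills flow: `∂ₜ(Γ_t)ₖ = Σᵢ ∇ᵢ(F_t)_{ik}` on a time set `S`. -/
def YMFlowOn (Γt : ℝ → Conn n m) (S : Set ℝ) : Prop :=
  ∀ t ∈ S, ∀ (x : Fin n → ℝ) (k : Fin n) (a b : Fin m),
    HasDerivWithinAt (fun t' => Γt t' x k a b)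
      ((∑ i, covDer (Γt t) i (fun y => curv (Γt t) i k y) x) a b) S t

/-- Locally uniform in time polynomial curvature growth to order two. -/
def PolyCurvGrowth2On (Γt : ℝ → Conn n m) (S : Set ℝ) : Prop :=
  ∀ J : Set ℝ, IsCompact J → J ⊆ S →
    ∃ p : Polynomial ℝ, ∀ t ∈ J, ∀ x,
      normF (Γt t) x
        + (∑ i, ∑ j, ∑ k,
            frobNorm (covDer (Γt t) i (fun y => curv (Γt t) j k y) x))
        + (∑ i, ∑ j, ∑ k, ∑ l,
            frobNorm (covDer (Γt t) i
              (fun y => covDer (Γt t) j (fun z => curv (Γt t) k l z) y) x))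
        ≤ p.eval (enorm x)

end YM

namespace YM

/-- Polynomially bounded functions. -/
def PB (f : (Fin n → ℝ) → ℝ) : Prop :=
  ∃ p : Polynomial ℝ, ∀ x, |f x| ≤ p.eval (enorm x)

theorem PB.add {f g : (Fin n → ℝ) → ℝ} (hf : PB f) (hg : PB g) : PB fun x => f x + g x := by
  obtain ⟨p, hp⟩ := hf
  obtain ⟨q, hq⟩ := hg
  refine ⟨p + q, fun x => ?_⟩
  rw [Polynomial.eval_add]
  exact (abs_add_le _ _).trans (add_le_add (hp x) (hq x))

theorem PB.mul {f g : (Fin n → ℝ) → ℝ} (hf : PB f) (hg : PB g) : PB fun x => f x * g x := by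
  obtain ⟨p, hp⟩ := hf
  obtain ⟨q, hq⟩ := hg
  refine ⟨p * q, fun x => ?_⟩
  rw [Polynomial.eval_mul, abs_mul]
  exact mul_le_mul (hp x) (hq x) (abs_nonneg _) ((abs_nonneg _).trans (hp x))

theorem PB.const (c : ℝ) : PB fun _ : Fin n → ℝ => c := ⟨Polynomial.C |c|, fun x => by simp⟩

theorem PB.sub {f g : (Fin n → ℝ) → ℝ} (hf : PB f) (hg : PB g) : PB fun x => f x - g x := by
  have := hf.add ((PB.const (-1)).mul hg)
  convert this using 2
  ring

theorem PB.sum {ι : Type*} (s : Finset ι) {f : ι → (Fin n → ℝ) → ℝ} (hf : ∀ i ∈ s, PB (f i)) :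
    PB fun x => ∑ i ∈ s, f i x := by
  classical
  induction s using Finset.induction_on with
  | empty => simpa using PB.const 0
  | insert a s ha ih =>
    simp only [Finset.sum_insert ha]
    exact (hf a (by simp)).add (ih fun i hi => hf i (by simp [hi]))

theorem PB.coord (i : Fin n) : PB fun x : Fin n → ℝ => x i := by
  refine ⟨Polynomial.X, fun x => ?_⟩
  rw [Polynomial.eval_X]
  refine Real.abs_le_sqrt ?_
  exact Finset.single_le_sum (f := fun i => x i ^ 2) (fun i _ => sq_nonneg _) (Finset.mem_univ i)

/-- Gaussian weight without constant. -/
def gw (x : Fin n → ℝ) : ℝ := Real.exp (-(∑ i, x i ^ 2) / 4)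

theorem poly_le_exp (p : Polynomial ℝ) :
    ∃ C, 0 ≤ C ∧ ∀ r : ℝ, 0 ≤ r → p.eval r ≤ C * Real.exp (r ^ 2 / 8) := by
  induction p using Polynomial.induction_on' with
  | add p q hp hq =>
    obtain ⟨C, hC, h1⟩ := hp
    obtain ⟨D, hD, h2⟩ := hq
    refine ⟨C + D, by positivity, fun r hr => ?_⟩
    rw [Polynomial.eval_add, add_mul]
    exact add_le_add (h1 r hr) (h2 r hr)
  | monomial k a =>
    refine ⟨|a| * (1 + 8 ^ k * k.factorial), by positivity, fun r hr => ?_⟩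
    have h1 : (r ^ 2 / 8) ^ k / k.factorial ≤ Real.exp (r ^ 2 / 8) :=
      Real.pow_div_factorial_le_exp _ (by positivity) k
    have h0 : 1 ≤ Real.exp (r ^ 2 / 8) := Real.one_le_exp (by positivity)
    have h2 : r ^ k ≤ 1 + (r ^ k) ^ 2 := by nlinarith [sq_nonneg (r ^ k - 1)]
    have h3 : (r ^ k) ^ 2 ≤ 8 ^ k * k.factorial * Real.exp (r ^ 2 / 8) := by
      have hk : (0 : ℝ) < k.factorial := by positivity
      rw [div_le_iff₀ hk, div_pow, div_le_iff₀ (by positivity)] at h1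
      calc (r ^ k) ^ 2 = (r ^ 2) ^ k := by ring
        _ ≤ _ := h1
        _ = _ := by ring
    rw [Polynomial.eval_monomial]
    calc a * r ^ k ≤ |a| * r ^ k := by gcongr; exact le_abs_self a
      _ ≤ |a| * ((1 + 8 ^ k * k.factorial) * Real.exp (r ^ 2 / 8)) := by
        gcongr
        linarith
      _ = _ := by ring

theorem gw_int8 : Integrable fun x : Fin n → ℝ => Real.exp (-(∑ i, x i ^ 2) / 8) := by
  have h := Integrable.fintype_prod (ι := Fin n) (E := ℝ)
    (f := fun _ (x : ℝ) => Real.exp (-(1 / 8) * x ^ 2)) (μ := fun _ => volume)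
    (fun _ => integrable_exp_neg_mul_sq (b := 1 / 8) (by norm_num))
  refine h.congr (Eventually.of_forall fun x => ?_)
  simp only
  rw [← Real.exp_sum]
  congr 1
  rw [← Finset.mul_sum]
  ring

theorem gw_cont : Continuous (gw (n := n)) := by
  unfold gw
  fun_prop

theorem PB.integrable {u : (Fin n → ℝ) → ℝ} (hu : PB u) (hc : Continuous u) :
    Integrable fun x => u x * gw x := by
  obtain ⟨p, hp⟩ := hu
  obtain ⟨C, hC, h⟩ := poly_le_exp p
  refine (gw_int8.const_mul C).mono' (hc.mul gw_cont).aestronglyMeasurable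
    (Eventually.of_forall fun x => ?_)
  have h1 := h (enorm x) (Real.sqrt_nonneg _)
  rw [Real.norm_eq_abs, abs_mul, gw, abs_of_pos (Real.exp_pos _)]
  have h2 : enorm x ^ 2 = ∑ i, x i ^ 2 := Real.sq_sqrt (Finset.sum_nonneg fun i _ => sq_nonneg _)
  rw [h2] at h1
  calc |u x| * _ ≤ (C * Real.exp ((∑ i, x i ^ 2) / 8)) * Real.exp (-(∑ i, x i ^ 2) / 4) := by
        gcongr
        exact (hp x).trans h1
    _ = _ := by
        rw [mul_assoc, ← Real.exp_add]
        congr 2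
        ring

theorem gw_hasFDeriv (x : Fin n → ℝ) (i : Fin n) :
    DifferentiableAt ℝ (gw (n := n)) x ∧
      fderiv ℝ (gw (n := n)) x (Pi.single i 1) = -(x i / 2) * gw x := by
  have h1 : HasFDerivAt (fun x : Fin n → ℝ => -(∑ j, x j ^ 2) * (1 / 4)) _ x :=
    (HasFDerivAt.fun_sum (u := Finset.univ) fun j _ =>
      (hasFDerivAt_apply (𝕜 := ℝ) j x).pow 2).neg.mul_const (1 / 4)
  have h2 := h1.exp
  have h3 : (gw (n := n)) = fun x => Real.exp (-(∑ j, x j ^ 2) * (1 / 4)) := by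
    funext x
    simp only [gw]
    congr 1
    ring
  rw [h3]
  refine ⟨h2.differentiableAt, ?_⟩
  rw [h2.fderiv]
  simp [Pi.single_apply]
  ring

theorem ibp {u : (Fin n → ℝ) → ℝ} (i : Fin n) {d : (Fin n → ℝ) → ℝ}
    (hu : ContDiff ℝ (⊤ : ℕ∞) u) (hd : ∀ x, fderiv ℝ u x (Pi.single i 1) = d x)
    (hub : PB u) (hdb : PB d) :
    Integrable (fun x => (d x - x i / 2 * u x) * gw x) ∧
      ∫ x, (d x - x i / 2 * u x) * gw x = 0 := by
  have hdc : Continuous d := by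
    have : d = fun x => fderiv ℝ u x (Pi.single i 1) := funext fun x => (hd x).symm
    rw [this]
    exact (hu.continuous_fderiv (by simp)).clm_apply continuous_const
  have hI : Integrable (fun x => (d x - x i / 2 * u x) * gw x) := by
    refine PB.integrable ?_ ?_
    · have := hdb.sub (((PB.coord i).mul (PB.const (1 / 2))).mul hub)
      convert this using 4
      ring
    · have := hu.continuous
      fun_prop
  refine ⟨hI, ?_⟩
  have hdiff : ∀ x, DifferentiableAt ℝ (fun x => u x * gw x) x := fun x =>
    ((hu.differentiable (by simp)) x).mul (gw_hasFDeriv x i).1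
  have hf : ∀ x, fderiv ℝ (fun x => u x * gw x) x (Pi.single i 1)
      = (d x - x i / 2 * u x) * gw x := by
    intro x
    rw [fderiv_fun_mul ((hu.differentiable (by simp)) x) (gw_hasFDeriv x i).1]
    simp only [_root_.add_apply, _root_.smul_apply, smul_eq_mul, hd,
      (gw_hasFDeriv x i).2]
    ring
  have := integral_mul_fderiv_eq_neg_fderiv_mul_of_integrable (μ := volume)
    (f := fun x => u x * gw x) (g := fun _ : Fin n → ℝ => (1 : ℝ)) (v := Pi.single i 1)
    (by simpa [hf] using hI) (by simp) (by simpa using hub.integrable hu.continuous)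
    (fun x _ => hdiff x) (by simp)
  simpa [hf] using this

/-! Matrix calculus -/

theorem SmoothMat.diff {A : (Fin n → ℝ) → Matrix (Fin m) (Fin m) ℝ} (hA : SmoothMat A)
    (a b : Fin m) (x : Fin n → ℝ) : DifferentiableAt ℝ (fun y => A y a b) x :=
  (hA a b).differentiable (by simp) x

theorem SmoothMat.pder {A : (Fin n → ℝ) → Matrix (Fin m) (Fin m) ℝ} (hA : SmoothMat A)
    (i : Fin n) : SmoothMat (pder i A) := by
  intro a b
  simp only [YM.pder, Matrix.of_apply]
  exact ((hA a b).fderiv_right (m := (⊤ : ℕ∞)) (by simp)).clm_apply contDiff_const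

theorem SmoothMat.mul {A B : (Fin n → ℝ) → Matrix (Fin m) (Fin m) ℝ} (hA : SmoothMat A)
    (hB : SmoothMat B) : SmoothMat fun x => A x * B x := by
  intro a b
  simp only [Matrix.mul_apply]
  exact ContDiff.sum fun c _ => (hA a c).mul (hB c b)

theorem SmoothMat.sub {A B : (Fin n → ℝ) → Matrix (Fin m) (Fin m) ℝ} (hA : SmoothMat A)
    (hB : SmoothMat B) : SmoothMat fun x => A x - B x :=
  fun a b => (hA a b).sub (hB a b)

theorem SmoothMat.add {A B : (Fin n → ℝ) → Matrix (Fin m) (Fin m) ℝ} (hA : SmoothMat A)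
    (hB : SmoothMat B) : SmoothMat fun x => A x + B x :=
  fun a b => (hA a b).add (hB a b)

theorem SmoothMat.comm {A B : (Fin n → ℝ) → Matrix (Fin m) (Fin m) ℝ} (hA : SmoothMat A)
    (hB : SmoothMat B) : SmoothMat fun x => comm (A x) (B x) :=
  (hA.mul hB).sub (hB.mul hA)

theorem Smooth.curv {Γ : Conn n m} (h : Smooth Γ) (i j : Fin n) : SmoothMat (curv Γ i j) :=
  (((h j).pder i).sub ((h i).pder j)).add ((h i).comm (h j))

theorem pder_add {A B : (Fin n → ℝ) → Matrix (Fin m) (Fin m) ℝ} (hA : SmoothMat A)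
    (hB : SmoothMat B) (i : Fin n) (x : Fin n → ℝ) :
    pder i (fun x => A x + B x) x = pder i A x + pder i B x := by
  ext a b
  simp only [YM.pder, Matrix.of_apply, Matrix.add_apply]
  rw [fderiv_fun_add (hA.diff a b x) (hB.diff a b x)]
  rfl

theorem pder_sub {A B : (Fin n → ℝ) → Matrix (Fin m) (Fin m) ℝ} (hA : SmoothMat A)
    (hB : SmoothMat B) (i : Fin n) (x : Fin n → ℝ) :
    pder i (fun x => A x - B x) x = pder i A x - pder i B x := by
  ext a b
  simp only [YM.pder, Matrix.of_apply, Matrix.sub_apply]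
  rw [fderiv_fun_sub (hA.diff a b x) (hB.diff a b x)]
  rfl

theorem pder_mul {A B : (Fin n → ℝ) → Matrix (Fin m) (Fin m) ℝ} (hA : SmoothMat A)
    (hB : SmoothMat B) (i : Fin n) (x : Fin n → ℝ) :
    pder i (fun x => A x * B x) x = pder i A x * B x + A x * pder i B x := by
  ext a b
  have h : HasFDerivAt (fun y => ∑ c, A y a c * B y c b) _ x :=
    HasFDerivAt.fun_sum (u := Finset.univ) fun c _ =>
      (hA.diff a c x).hasFDerivAt.mul (hB.diff c b x).hasFDerivAt
  have h' : YM.pder i (fun x => A x * B x) x a b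
      = fderiv ℝ (fun y => ∑ c, A y a c * B y c b) x (Pi.single i 1) := rfl
  rw [h', h.fderiv, Matrix.add_apply, Matrix.mul_apply, Matrix.mul_apply,
    ← Finset.sum_add_distrib, _root_.sum_apply]
  refine Finset.sum_congr rfl fun c _ => ?_
  simp [YM.pder]
  ring

theorem pder_comm {A B : (Fin n → ℝ) → Matrix (Fin m) (Fin m) ℝ} (hA : SmoothMat A)
    (hB : SmoothMat B) (i : Fin n) (x : Fin n → ℝ) :
    pder i (fun x => comm (A x) (B x)) x = comm (pder i A x) (B x) + comm (A x) (pder i B x) := by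
  simp only [YM.comm]
  rw [pder_sub (hA.mul hB) (hB.mul hA), pder_mul hA hB, pder_mul hB hA]
  abel

theorem pder_pder {A : (Fin n → ℝ) → Matrix (Fin m) (Fin m) ℝ} (hA : SmoothMat A)
    (i j : Fin n) (x : Fin n → ℝ) : pder i (pder j A) x = pder j (pder i A) x := by
  ext a b
  have hs : IsSymmSndFDerivAt ℝ (fun y => A y a b) x :=
    (hA a b).contDiffAt.isSymmSndFDerivAt (by simpa using WithTop.coe_le_coe.2 (le_top : (2 : ℕ∞) ≤ ⊤))
  have hd : DifferentiableAt ℝ (fderiv ℝ (fun y => A y a b)) x :=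
    ((hA a b).fderiv_right (m := (⊤ : ℕ∞)) (by simp)).differentiable (by simp) x
  simp only [YM.pder, Matrix.of_apply]
  rw [fderiv_clm_apply hd (by fun_prop), fderiv_clm_apply hd (by fun_prop)]
  simp
  exact hs _ _

theorem pder_curv {Γ : Conn n m} (h : Smooth Γ) (i j k : Fin n) (x : Fin n → ℝ) :
    pder i (fun y => curv Γ j k y) x = pder i (pder j fun y => Γ y k) x
      - pder i (pder k fun y => Γ y j) x + (comm (pder i (fun y => Γ y j) x) (Γ x k)
      + comm (Γ x j) (pder i (fun y => Γ y k) x)) := by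
  simp only [YM.curv]
  rw [pder_add (((h k).pder j).sub ((h j).pder k)) ((h j).comm (h k)),
    pder_sub ((h k).pder j) ((h j).pder k), pder_comm (h j) (h k)]

theorem bianchi {Γ : Conn n m} (h : Smooth Γ) (i j k : Fin n) (x : Fin n → ℝ) :
    covDer Γ i (fun y => curv Γ j k y) x + covDer Γ j (fun y => curv Γ k i y) x
      + covDer Γ k (fun y => curv Γ i j y) x = 0 := by
  simp only [covDer, pder_curv h]
  rw [pder_pder (h k) j i, pder_pder (h j) k i, pder_pder (h i) k j]
  simp only [YM.curv, YM.comm]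
  noncomm_ring

theorem curv_swap (Γ : Conn n m) (i j : Fin n) (x : Fin n → ℝ) :
    curv Γ i j x = - curv Γ j i x := by
  simp only [YM.curv, YM.comm]
  abel

theorem covDer_swap (Γ : Conn n m) (i j k : Fin n) (x : Fin n → ℝ) :
    covDer Γ i (fun y => curv Γ j k y) x = - covDer Γ i (fun y => curv Γ k j y) x := by
  have h : (fun y => curv Γ j k y) = fun y => - curv Γ k j y := funext fun y => curv_swap Γ j k y
  rw [h]
  simp only [covDer, YM.comm]
  have : pder i (fun y => - curv Γ k j y) x = - pder i (fun y => curv Γ k j y) x := by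
    ext a b
    simp [YM.pder]
  rw [this]
  noncomm_ring

/-! Frobenius inner product -/

theorem frobInner_comm (A B : Matrix (Fin m) (Fin m) ℝ) : frobInner A B = frobInner B A := by
  simp only [frobInner, mul_comm]

theorem frobInner_add_left (A B C : Matrix (Fin m) (Fin m) ℝ) :
    frobInner (A + B) C = frobInner A C + frobInner B C := by
  simp only [frobInner, Matrix.add_apply, add_mul, Finset.sum_add_distrib]

theorem frobInner_neg_left (A C : Matrix (Fin m) (Fin m) ℝ) :
    frobInner (-A) C = - frobInner A C := by
  simp only [frobInner, Matrix.neg_apply, neg_mul, Finset.sum_neg_distrib]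

theorem frobInner_neg_right (A C : Matrix (Fin m) (Fin m) ℝ) :
    frobInner A (-C) = - frobInner A C := by
  rw [frobInner_comm, frobInner_neg_left, frobInner_comm]

theorem frobInner_add_right (A B C : Matrix (Fin m) (Fin m) ℝ) :
    frobInner A (B + C) = frobInner A B + frobInner A C := by
  rw [frobInner_comm, frobInner_add_left, frobInner_comm B, frobInner_comm C]

theorem frobInner_smul_left (c : ℝ) (A C : Matrix (Fin m) (Fin m) ℝ) :
    frobInner (c • A) C = c * frobInner A C := by
  simp only [frobInner, Matrix.smul_apply, smul_eq_mul, mul_assoc, Finset.mul_sum]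

theorem frobInner_zero_left (C : Matrix (Fin m) (Fin m) ℝ) :
    frobInner 0 C = 0 := by
  simp [frobInner]

theorem frobInner_sum_left {ι : Type*} (s : Finset ι) (A : ι → Matrix (Fin m) (Fin m) ℝ)
    (C : Matrix (Fin m) (Fin m) ℝ) :
    frobInner (∑ i ∈ s, A i) C = ∑ i ∈ s, frobInner (A i) C := by
  classical
  induction s using Finset.induction_on with
  | empty => simp [frobInner_zero_left]
  | insert a s ha ih => rw [Finset.sum_insert ha, Finset.sum_insert ha, frobInner_add_left, ih]

theorem frobInner_trace (A B : Matrix (Fin m) (Fin m) ℝ) : frobInner A B = (A * Bᵀ).trace := by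
  simp [frobInner, Matrix.trace, Matrix.mul_apply]

theorem frobInner_skew (G A B : Matrix (Fin m) (Fin m) ℝ) (hG : Gᵀ = -G) :
    frobInner (comm G A) B + frobInner A (comm G B) = 0 := by
  simp only [frobInner_trace, YM.comm, Matrix.transpose_sub, Matrix.transpose_mul, hG]
  have h : (G * (A * Bᵀ)).trace = (A * (Bᵀ * G)).trace := by
    rw [Matrix.trace_mul_comm, Matrix.mul_assoc]
  simp only [Matrix.sub_mul, Matrix.mul_sub, Matrix.trace_sub, Matrix.mul_neg, Matrix.neg_mul,
    Matrix.trace_neg, h, Matrix.mul_assoc]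
  ring

theorem frobSq_eq (A : Matrix (Fin m) (Fin m) ℝ) : frobSq A = frobInner A A := by
  simp only [frobSq, frobInner, sq]

theorem contDiff_frobInner {A B : (Fin n → ℝ) → Matrix (Fin m) (Fin m) ℝ} (hA : SmoothMat A)
    (hB : SmoothMat B) : ContDiff ℝ (⊤ : ℕ∞) fun x => frobInner (A x) (B x) :=
  ContDiff.sum fun a _ => ContDiff.sum fun b _ => (hA a b).mul (hB a b)

theorem fderiv_frobInner {Γ : Conn n m} (hmc : MetricCompat Γ)
    {A B : (Fin n → ℝ) → Matrix (Fin m) (Fin m) ℝ} (hA : SmoothMat A)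
    (hB : SmoothMat B) (i : Fin n) (x : Fin n → ℝ) :
    fderiv ℝ (fun x => frobInner (A x) (B x)) x (Pi.single i 1)
      = frobInner (covDer Γ i A x) (B x) + frobInner (A x) (covDer Γ i B x) := by
  have h1 : fderiv ℝ (fun x => frobInner (A x) (B x)) x (Pi.single i 1)
      = frobInner (YM.pder i A x) (B x) + frobInner (A x) (YM.pder i B x) := by
    have h : HasFDerivAt (fun x => frobInner (A x) (B x)) _ x :=
      HasFDerivAt.fun_sum (u := Finset.univ) fun a _ =>
        HasFDerivAt.fun_sum (u := Finset.univ) fun b _ =>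
          (hA.diff a b x).hasFDerivAt.mul (hB.diff a b x).hasFDerivAt
    rw [h.fderiv]
    simp only [frobInner, YM.pder, _root_.sum_apply, ← Finset.sum_add_distrib]
    refine Finset.sum_congr rfl fun a _ => Finset.sum_congr rfl fun b _ => ?_
    simp
    ring
  have h2 := frobInner_skew (Γ x i) (A x) (B x) (hmc x i)
  rw [h1]
  simp only [covDer, frobInner_add_left, frobInner_add_right]
  linarith

theorem entry_le_frobNorm (A : Matrix (Fin m) (Fin m) ℝ) (a b : Fin m) : |A a b| ≤ frobNorm A := by
  refine Real.abs_le_sqrt ?_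
  exact (Finset.single_le_sum (f := fun b => A a b ^ 2) (fun i _ => sq_nonneg _)
    (Finset.mem_univ b)).trans (Finset.single_le_sum (f := fun a => ∑ b, A a b ^ 2)
      (fun i _ => Finset.sum_nonneg fun _ _ => sq_nonneg _) (Finset.mem_univ a))

/-- Entrywise polynomially bounded. -/
def PBM (A : (Fin n → ℝ) → Matrix (Fin m) (Fin m) ℝ) : Prop := ∀ a b, PB fun x => A x a b

theorem PBM.frobInner {A B : (Fin n → ℝ) → Matrix (Fin m) (Fin m) ℝ} (hA : PBM A) (hB : PBM B) :
    PB fun x => frobInner (A x) (B x) :=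
  PB.sum _ fun a _ => PB.sum _ fun b _ => (hA a b).mul (hB a b)

theorem frobNorm_nonneg (A : Matrix (Fin m) (Fin m) ℝ) : 0 ≤ frobNorm A := Real.sqrt_nonneg _

theorem frobSq_nonneg (A : Matrix (Fin m) (Fin m) ℝ) : 0 ≤ frobSq A :=
  Finset.sum_nonneg fun _ _ => Finset.sum_nonneg fun _ _ => sq_nonneg _

theorem PolyCurvGrowth2.curv {Γ : Conn n m} (h : PolyCurvGrowth2 Γ) (i j : Fin n) :
    PBM (curv Γ i j) := by
  obtain ⟨p, hp⟩ := h
  refine fun a b => ⟨p, fun x => (entry_le_frobNorm _ a b).trans (le_trans ?_ (hp x))⟩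
  have h1 : frobNorm (YM.curv Γ i j x) ≤ normF Γ x := by
    refine Real.sqrt_le_sqrt ?_
    exact (Finset.single_le_sum (f := fun j => frobSq (YM.curv Γ i j x))
      (fun i _ => frobSq_nonneg _) (Finset.mem_univ j)).trans
      (Finset.single_le_sum (f := fun i => ∑ j, frobSq (YM.curv Γ i j x))
      (fun i _ => Finset.sum_nonneg fun _ _ => frobSq_nonneg _) (Finset.mem_univ i))
  have h2 : 0 ≤ ∑ i, ∑ j, ∑ k, frobNorm (covDer Γ i (fun y => YM.curv Γ j k y) x) :=
    Finset.sum_nonneg fun _ _ => Finset.sum_nonneg fun _ _ => Finset.sum_nonneg fun _ _ =>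
      frobNorm_nonneg _
  have h3 : 0 ≤ ∑ i, ∑ j, ∑ k, ∑ l, frobNorm (covDer Γ i
      (fun y => covDer Γ j (fun z => YM.curv Γ k l z) y) x) :=
    Finset.sum_nonneg fun _ _ => Finset.sum_nonneg fun _ _ => Finset.sum_nonneg fun _ _ =>
      Finset.sum_nonneg fun _ _ => frobNorm_nonneg _
  linarith

theorem PolyCurvGrowth2.covDer {Γ : Conn n m} (h : PolyCurvGrowth2 Γ) (i j k : Fin n) :
    PBM (covDer Γ i (fun y => YM.curv Γ j k y)) := by
  obtain ⟨p, hp⟩ := h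
  refine fun a b => ⟨p, fun x => (entry_le_frobNorm _ a b).trans (le_trans ?_ (hp x))⟩
  have h1 : 0 ≤ normF Γ x := Real.sqrt_nonneg _
  have h2 : frobNorm (YM.covDer Γ i (fun y => YM.curv Γ j k y) x) ≤
      ∑ i, ∑ j, ∑ k, frobNorm (YM.covDer Γ i (fun y => YM.curv Γ j k y) x) := by
    refine le_trans ?_ (Finset.single_le_sum (f := fun i => ∑ j, ∑ k, frobNorm
      (YM.covDer Γ i (fun y => YM.curv Γ j k y) x)) (fun i _ => Finset.sum_nonneg fun _ _ =>
      Finset.sum_nonneg fun _ _ => frobNorm_nonneg _) (Finset.mem_univ i))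
    refine le_trans ?_ (Finset.single_le_sum (f := fun j => ∑ k, frobNorm
      (YM.covDer Γ i (fun y => YM.curv Γ j k y) x)) (fun i _ =>
      Finset.sum_nonneg fun _ _ => frobNorm_nonneg _) (Finset.mem_univ j))
    exact (Finset.single_le_sum (f := fun k => frobNorm
      (YM.covDer Γ i (fun y => YM.curv Γ j k y) x)) (fun i _ =>
      frobNorm_nonneg _) (Finset.mem_univ k))
  have h3 : 0 ≤ ∑ i, ∑ j, ∑ k, ∑ l, frobNorm (YM.covDer Γ i
      (fun y => YM.covDer Γ j (fun z => YM.curv Γ k l z) y) x) :=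
    Finset.sum_nonneg fun _ _ => Finset.sum_nonneg fun _ _ => Finset.sum_nonneg fun _ _ =>
      Finset.sum_nonneg fun _ _ => frobNorm_nonneg _
  linarith


/-- The algebraic identity behind the weighted Pohozaev formula. -/
theorem alg_identity (x : Fin n → ℝ) (f : Fin n → Fin n → Matrix (Fin m) (Fin m) ℝ)
    (d : Fin n → Fin n → Fin n → Matrix (Fin m) (Fin m) ℝ)
    (h1 : ∀ i j, f i j = - f j i) (h2 : ∀ i j k, d i j k = - d i k j)
    (h3 : ∀ i j k, d i j k + d j k i + d k i j = 0)
    (h4 : ∀ k, ∑ i, d i i k = (1 / 2 : ℝ) • ∑ i, x i • f i k) :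
    ∑ i, ∑ j, ((if i = j then 1 else 0) * (∑ k, frobInner (f i k) (f j k)
        - (if i = j then 1 / 4 else 0) * ∑ k, ∑ l, frobInner (f k l) (f k l))
      + x j * (∑ k, (frobInner (d i i k) (f j k) + frobInner (f i k) (d i j k))
        - (if i = j then 1 / 4 else 0) *
          ∑ k, ∑ l, (frobInner (d i k l) (f k l) + frobInner (f k l) (d i k l)))
      - x i / 2 * (x j * (∑ k, frobInner (f i k) (f j k)
        - (if i = j then 1 / 4 else 0) * ∑ k, ∑ l, frobInner (f k l) (f k l))))
    = ((∑ i, x i ^ 2) / 8 + (4 - n) / 4) * ∑ k, ∑ l, frobSq (f k l) := by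
  simp only [frobSq_eq]
  set N := ∑ k, ∑ l, frobInner (f k l) (f k l) with hN
  set a : Fin n → Fin n → ℝ := fun i j => ∑ k, frobInner (f i k) (f j k) with ha
  set M : Fin n → ℝ := fun j => ∑ k, ∑ l, frobInner (f k l) (d j k l) with hM
  have hP : ∀ j, ∑ i, ∑ k, frobInner (d i i k) (f j k) = 1 / 2 * ∑ i, x i * a i j := by
    intro j
    rw [Finset.sum_comm]
    simp only [← frobInner_sum_left, h4, frobInner_smul_left]
    simp only [frobInner_sum_left, frobInner_smul_left, ha, ← Finset.mul_sum]
    rw [Finset.sum_comm]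
    simp only [Finset.mul_sum]
  have hR : ∀ j, ∑ i, ∑ k, frobInner (f i k) (d i j k) = 1 / 2 * M j := by
    intro j
    have e1 : ∑ i, ∑ k, frobInner (f i k) (d i j k) = ∑ i, ∑ k, frobInner (f k i) (d k j i) :=
      Finset.sum_comm
    have e2 : ∑ i, ∑ k, frobInner (f i k) (d i j k) + ∑ i, ∑ k, frobInner (f k i) (d k j i)
        = M j := by
      simp only [hM, ← Finset.sum_add_distrib]
      refine Finset.sum_congr rfl fun i _ => Finset.sum_congr rfl fun k _ => ?_
      rw [h1 k i, h2 k j i, frobInner_neg_left, frobInner_neg_right, neg_neg,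
        ← frobInner_add_right]
      congr 1
      rw [h2 j i k]
      have := h3 i j k
      rw [eq_neg_iff_add_eq_zero, ← this]
      abel
    linarith
  have hM' : ∀ j, ∑ k, ∑ l, (frobInner (d j k l) (f k l) + frobInner (f k l) (d j k l))
      = 2 * M j := by
    intro j
    simp only [hM, Finset.mul_sum]
    refine Finset.sum_congr rfl fun i _ => Finset.sum_congr rfl fun k _ => ?_
    rw [frobInner_comm (d j i k)]
    ring
  have hNa : ∑ i, a i i = N := rfl
  simp only [hM']
  have key : ∀ i j, ((if i = j then (1 : ℝ) else 0) * (a i j - (if i = j then 1 / 4 else 0) * N)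
      + x j * (∑ k, (frobInner (d i i k) (f j k) + frobInner (f i k) (d i j k))
        - (if i = j then 1 / 4 else 0) * (2 * M i))
      - x i / 2 * (x j * (a i j - (if i = j then 1 / 4 else 0) * N)))
      = (if i = j then a i j - 1 / 4 * N - 1 / 2 * (x j * M i) + x i * x j / 8 * N else 0)
        + x j * (∑ k, frobInner (d i i k) (f j k) + ∑ k, frobInner (f i k) (d i j k))
        - 1 / 2 * (x j * (x i * a i j)) := by
    intro i j
    rw [Finset.sum_add_distrib]
    split_ifs <;> ring
  rw [Finset.sum_congr rfl fun i _ => Finset.sum_congr rfl fun j _ => key i j]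
  simp only [Finset.sum_add_distrib, Finset.sum_sub_distrib, Finset.sum_ite_eq, Finset.mem_univ,
    if_true]
  have t2 : ∑ i, ∑ j, x j * (∑ k, frobInner (d i i k) (f j k) + ∑ k, frobInner (f i k) (d i j k))
      = 1 / 2 * (∑ j, ∑ i, x j * (x i * a i j)) + 1 / 2 * ∑ j, x j * M j := by
    rw [Finset.sum_comm]
    simp only [← Finset.mul_sum, Finset.sum_add_distrib, hP, hR]
    rw [Finset.mul_sum, Finset.mul_sum, ← Finset.sum_add_distrib]
    exact Finset.sum_congr rfl fun j _ => by ring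
  have t3 : ∑ i, ∑ j, 1 / 2 * (x j * (x i * a i j)) = 1 / 2 * (∑ j, ∑ i, x j * (x i * a i j)) := by
    rw [Finset.sum_comm]
    simp only [Finset.mul_sum]
  have t4 : ∑ i, x i * x i / 8 * N = (∑ i, x i ^ 2) / 8 * N := by
    rw [Finset.sum_div, Finset.sum_mul]
    exact Finset.sum_congr rfl fun j _ => by ring
  have t5 : ∑ i, 1 / 2 * (x i * M i) = 1 / 2 * ∑ i, x i * M i := by rw [Finset.mul_sum]
  rw [t2, t3, t4, t5, hNa, Finset.sum_const, Finset.card_univ, Fintype.card_fin, nsmul_eq_mul]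
  ring

theorem main_integral {Γ : Conn n m} (hsm : Smooth Γ) (hmc : MetricCompat Γ)
    (hsol : IsSoliton Γ) (hpoly : PolyCurvGrowth2 Γ) :
    Integrable (fun x : Fin n → ℝ => ((∑ i, x i ^ 2) / 8 + (4 - n) / 4) * normSqF Γ x * gw x) ∧
    ∫ x : Fin n → ℝ, ((∑ i, x i ^ 2) / 8 + (4 - n) / 4) * normSqF Γ x * gw x = 0 := by
  set S : Fin n → Fin n → (Fin n → ℝ) → ℝ := fun i j x =>
    ∑ k, frobInner (curv Γ i k x) (curv Γ j k x)
        - (if i = j then 1 / 4 else 0) * ∑ k, ∑ l, frobInner (curv Γ k l x) (curv Γ k l x) with hS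
  set dS : Fin n → Fin n → (Fin n → ℝ) → ℝ := fun i j x =>
    ∑ k, (frobInner (covDer Γ i (curv Γ i k) x) (curv Γ j k x)
        + frobInner (curv Γ i k x) (covDer Γ i (curv Γ j k) x))
        - (if i = j then 1 / 4 else 0) * ∑ k, ∑ l,
          (frobInner (covDer Γ i (curv Γ k l) x) (curv Γ k l x)
            + frobInner (curv Γ k l x) (covDer Γ i (curv Γ k l) x)) with hdS
  have hc : ∀ i j k l, ContDiff ℝ (⊤ : ℕ∞) fun x => frobInner (curv Γ i j x) (curv Γ k l x) :=
    fun i j k l => contDiff_frobInner (hsm.curv i j) (hsm.curv k l)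
  have hSc : ∀ i j, ContDiff ℝ (⊤ : ℕ∞) (S i j) := fun i j =>
    (ContDiff.sum fun k _ => hc i k j k).sub
      (contDiff_const.mul (ContDiff.sum fun k _ => ContDiff.sum fun l _ => hc k l k l))
  have hSd : ∀ i j x, fderiv ℝ (S i j) x (Pi.single i 1) = dS i j x := by
    intro i j x
    have hd : ∀ i j k l, HasFDerivAt (fun x => frobInner (curv Γ i j x) (curv Γ k l x))
      (fderiv ℝ (fun x => frobInner (curv Γ i j x) (curv Γ k l x)) x) x := fun i j k l =>
        ((hc i j k l).differentiable (by simp) x).hasFDerivAt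
    have h : HasFDerivAt (S i j) _ x :=
      (HasFDerivAt.fun_sum (u := Finset.univ) fun k _ => hd i k j k).sub
        ((HasFDerivAt.fun_sum (u := Finset.univ) fun k _ =>
          HasFDerivAt.fun_sum (u := Finset.univ) fun l _ => hd k l k l).const_mul
            (if i = j then (1 / 4 : ℝ) else 0))
    rw [h.fderiv]
    simp only [_root_.sub_apply, _root_.smul_apply, _root_.sum_apply, smul_eq_mul, hdS,
      fderiv_frobInner hmc (hsm.curv _ _) (hsm.curv _ _)]
  have hSb : ∀ i j, PB (S i j) := fun i j =>
    (PB.sum _ fun k _ => (hpoly.curv i k).frobInner (hpoly.curv j k)).sub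
      ((PB.const _).mul (PB.sum _ fun k _ => PB.sum _ fun l _ =>
        (hpoly.curv k l).frobInner (hpoly.curv k l)))
  have hdSb : ∀ i j, PB (dS i j) := fun i j =>
    (PB.sum _ fun k _ => ((hpoly.covDer i i k).frobInner (hpoly.curv j k)).add
        ((hpoly.curv i k).frobInner (hpoly.covDer i j k))).sub
      ((PB.const _).mul (PB.sum _ fun k _ => PB.sum _ fun l _ =>
        ((hpoly.covDer i k l).frobInner (hpoly.curv k l)).add
          ((hpoly.curv k l).frobInner (hpoly.covDer i k l))))
  have hE : ∀ i j, _ := fun i j => ibp (u := fun x => x j * S i j x) i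
    (d := fun x => (if i = j then 1 else 0) * S i j x + x j * dS i j x)
    ((contDiff_apply ℝ ℝ j).mul (hSc i j))
    (by
      intro x
      have h : HasFDerivAt (fun x : Fin n → ℝ => x j * S i j x) _ x :=
        (hasFDerivAt_apply (𝕜 := ℝ) j x).mul
          ((hSc i j).differentiable (by simp) x).hasFDerivAt
      rw [h.fderiv]
      simp only [_root_.add_apply, _root_.smul_apply, smul_eq_mul, hSd,
        ContinuousLinearMap.proj_apply, Pi.single_apply, eq_comm (a := j)]
      ring)
    ((PB.coord j).mul (hSb i j))
    (((PB.const _).mul (hSb i j)).add ((PB.coord j).mul (hdSb i j)))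
  have hfin : (fun x : Fin n → ℝ => ((∑ i, x i ^ 2) / 8 + (4 - n) / 4) * normSqF Γ x * gw x)
      = fun x => ∑ i, ∑ j, ((if i = j then 1 else 0) * S i j x + x j * dS i j x
        - x i / 2 * (x j * S i j x)) * gw x := by
    funext x
    simp only [← Finset.sum_mul]
    congr 1
    refine (alg_identity x (fun i j => curv Γ i j x)
      (fun i j k => covDer Γ i (fun y => curv Γ j k y) x) (fun i j => curv_swap Γ i j x)
      (fun i j k => covDer_swap Γ i j k x) (fun i j k => bianchi hsm i j k x) ?_).symm
    intro k
    have := hsol x k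
    simpa using this
  rw [hfin]
  refine ⟨integrable_finsetSum _ fun i _ => integrable_finsetSum _ fun j _ => (hE i j).1, ?_⟩
  rw [integral_finsetSum _ fun i _ => integrable_finsetSum _ fun j _ => (hE i j).1]
  refine Finset.sum_eq_zero fun i _ => ?_
  rw [integral_finsetSum _ fun j _ => (hE i j).1]
  exact Finset.sum_eq_zero fun j _ => (hE i j).2

end YM

/-- **Low-dimensional rigidity** (Proposition 1.3, second part): any
metric-compatible `(0,1)`-soliton on `ℝⁿ × ℝᵐ`, `n ≤ 4`, with polynomial
curvature growth to order two, is flat. -/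
theorem soliton_flat_low_dim (n m : ℕ) (hn : n ≤ 4) (hm : 1 ≤ m)
    (Γ : YM.Conn n m) (hsm : YM.Smooth Γ) (hmc : YM.MetricCompat Γ)
    (hsol : YM.IsSoliton Γ) (hpoly : YM.PolyCurvGrowth2 Γ) :
    ∀ (i j : Fin n) (x : Fin n → ℝ), YM.curv Γ i j x = 0 := by
  intro i j
  have : Nonempty (Fin n) := ⟨i⟩
  obtain ⟨hI, h0⟩ := YM.main_integral hsm hmc hsol hpoly
  have hn' : (0 : ℝ) ≤ (4 - n) / 4 := by
    have : (n : ℝ) ≤ 4 := by exact_mod_cast hn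
    linarith
  have hNn : ∀ x, 0 ≤ YM.normSqF Γ x := fun x =>
    Finset.sum_nonneg fun _ _ => Finset.sum_nonneg fun _ _ => YM.frobSq_nonneg _
  have hsq : ∀ x : Fin n → ℝ, 0 ≤ ∑ i, x i ^ 2 := fun x => Finset.sum_nonneg fun _ _ => sq_nonneg _
  have hNc : Continuous (YM.normSqF Γ) := by
    have : YM.normSqF Γ = fun x => ∑ i, ∑ j, YM.frobInner (YM.curv Γ i j x) (YM.curv Γ i j x) := by
      funext x
      simp only [YM.normSqF, YM.frobSq_eq]
    rw [this]
    exact continuous_finsetSum _ fun i _ => continuous_finsetSum _ fun j _ =>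
      (YM.contDiff_frobInner (hsm.curv i j) (hsm.curv i j)).continuous
  have hgp : ∀ x : Fin n → ℝ, 0 ≤ YM.gw x := fun x => (Real.exp_pos _).le
  rw [integral_eq_zero_iff_of_nonneg (fun x => mul_nonneg (mul_nonneg
    (add_nonneg (div_nonneg (hsq x) (by norm_num)) hn') (hNn x)) (hgp x)) hI] at h0
  have hz := (Continuous.ae_eq_iff_eq volume
    (((by fun_prop : Continuous fun x : Fin n → ℝ => (∑ i, x i ^ 2) / 8 + (4 - n : ℝ) / 4).mul
      hNc).mul YM.gw_cont) continuous_zero).1 h0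
  have hN0 : YM.normSqF Γ = fun _ => 0 := by
    refine Continuous.ext_on (dense_compl_singleton (0 : Fin n → ℝ)) hNc continuous_const ?_
    intro x hx
    have h1 := congrFun hz x
    have hpos : 0 < ∑ i, x i ^ 2 := by
      obtain ⟨k, hk⟩ := Function.ne_iff.1 (show x ≠ 0 from hx)
      have hk' : x k ≠ 0 := hk
      exact Finset.sum_pos' (fun _ _ => sq_nonneg _) ⟨k, Finset.mem_univ k, by positivity⟩
    have hp2 : (∑ i, x i ^ 2) / 8 + (4 - n : ℝ) / 4 ≠ 0 := by
      have : 0 < (∑ i, x i ^ 2) / 8 + (4 - n : ℝ) / 4 := by linarith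
      exact this.ne'
    have hg : YM.gw x ≠ 0 := (Real.exp_pos _).ne'
    simpa [hp2, hg] using h1
  intro x
  have hx : YM.normSqF Γ x = 0 := congrFun hN0 x
  rw [YM.normSqF, Finset.sum_eq_zero_iff_of_nonneg
    (fun _ _ => Finset.sum_nonneg fun _ _ => YM.frobSq_nonneg _)] at hx
  have hx1 := hx i (Finset.mem_univ _)
  rw [Finset.sum_eq_zero_iff_of_nonneg (fun _ _ => YM.frobSq_nonneg _)] at hx1
  have hx2 := hx1 j (Finset.mem_univ _)
  ext a b
  have h3 := YM.entry_le_frobNorm (YM.curv Γ i j x) a b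
  rw [YM.frobNorm, hx2, Real.sqrt_zero] at h3
  simpa using h3
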